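/- arXiv:0903.3151 — 3 statements merged into one kernel-verified Lean document; each statement's English description precedes it below -/
import Mathlib

section
/- For every integer r ≥ 4, every finite simple graph G that contains no clique on r−1 vertices and satisfies χ(G) ≥ r+1 has at least r+7 vertices; equivalently, the vertex Folkman number F_v(2_r; r−1) ≥ r+7. -/
open SimpleGraph

/-- The vertex Folkman number `F_v(2_r; q)`: the minimum number of vertices of a
`K_q`-free finite simple graph with chromatic number at least `r + 1`. -/
noncomputable def folkman (r q : ℕ) : ℕ :=
  sInf {n : ℕ | ∃ G : SimpleGraph (Fin n),
    G.CliqueFree q ∧ (r + 1 : ℕ∞) ≤ G.chromaticNumber}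

/-- Easy Ramsey bound: a triangle-free graph on at least `t(t+1)/2` vertices has an
independent set of size `t`. -/
theorem ramsey_aux {W : Type} [DecidableEq W] (H : SimpleGraph W)
    (htri : ∀ a b c, H.Adj a b → H.Adj b c → ¬ H.Adj a c) (t : ℕ) :
    ∀ s : Finset W, t * (t + 1) ≤ 2 * s.card →
      ∃ I ⊆ s, (∀ a ∈ I, ∀ b ∈ I, ¬ H.Adj a b) ∧ t ≤ I.card := by
  classical
  induction t with
  | zero => exact fun s _ => ⟨∅, by simp, by simp, by simp⟩
  | succ t ih =>
    intro s hs
    have hpos : 0 < s.card := by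
      by_contra h
      have : s.card = 0 := by omega
      rw [this] at hs
      nlinarith
    obtain ⟨v, hv⟩ := Finset.card_pos.mp hpos
    by_cases hd : t + 1 ≤ (s.filter (fun w => H.Adj v w)).card
    · refine ⟨s.filter (fun w => H.Adj v w), Finset.filter_subset _ _, ?_, hd⟩
      intro a ha b hb hab
      simp only [Finset.mem_filter] at ha hb
      exact htri v a b ha.2 hab hb.2
    · have h1 := Finset.card_filter_add_card_filter_not (s := s) (fun w => H.Adj v w)
      have hvm : v ∈ s.filter (fun w => ¬ H.Adj v w) := by simp [hv]
      have h2 := Finset.card_erase_add_one hvm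
      obtain ⟨I, hI, hind, hc⟩ := ih ((s.filter (fun w => ¬ H.Adj v w)).erase v) (by nlinarith)
      have hvI : v ∉ I := fun h => by simpa using hI h
      have hnb : ∀ a ∈ I, a ∈ s ∧ ¬ H.Adj v a := fun a ha => by
        have := hI ha
        simp only [Finset.mem_erase, Finset.mem_filter] at this
        exact this.2
      refine ⟨insert v I, ?_, ?_, ?_⟩
      · intro a ha
        rcases Finset.mem_insert.mp ha with rfl | ha
        · exact hv
        · exact (hnb a ha).1
      · intro a ha b hb
        rcases Finset.mem_insert.mp ha with ha | ha <;>
          rcases Finset.mem_insert.mp hb with hb | hb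
        · rw [ha, hb]; simp
        · rw [ha]; exact (hnb b hb).2
        · rw [hb]; exact fun h => (hnb a ha).2 h.symm
        · exact hind a ha b hb
      · rw [Finset.card_insert_of_notMem hvI]; omega

/-- Independent set in one small component. -/
theorem comp_aux {W : Type} [DecidableEq W] (H : SimpleGraph W)
    (htri : ∀ a b c, H.Adj a b → H.Adj b c → ¬ H.Adj a c) (s : Finset W)
    (hs : s.card / 2 ≤ 5) :
    ∃ I ⊆ s, (∀ a ∈ I, ∀ b ∈ I, ¬ H.Adj a b) ∧
      s.card ≤ I.card + s.card / 2 + s.card / 2 / 2 := by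
  obtain ⟨I, h1, h2, h3⟩ := ramsey_aux H htri (s.card - s.card / 2 - s.card / 2 / 2) s (by
    have : s.card ≤ 11 := by omega
    generalize s.card = m at *
    interval_cases m <;> simp)
  exact ⟨I, h1, h2, by omega⟩

/-- Gluing independent sets of the pieces. -/
theorem glue_aux {W ι : Type} [Fintype W] [Fintype ι] [DecidableEq W] [DecidableEq ι]
    (H : SimpleGraph W)
    (htri : ∀ a b c, H.Adj a b → H.Adj b c → ¬ H.Adj a c)
    (p : W → ι) (hp : ∀ a b, H.Adj a b → p a = p b)
    (hM : ∑ i, (Finset.univ.filter (fun w => p w = i)).card / 2 ≤ 5) :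
    ∃ I : Finset W, (∀ a ∈ I, ∀ b ∈ I, ¬ H.Adj a b) ∧
      Fintype.card W ≤ I.card + ∑ i, (Finset.univ.filter (fun w => p w = i)).card / 2
        + (∑ i, (Finset.univ.filter (fun w => p w = i)).card / 2) / 2 := by
  have hle : ∀ i, (Finset.univ.filter (fun w => p w = i)).card / 2 ≤ 5 := fun i =>
    (Finset.single_le_sum (f := fun i => (Finset.univ.filter (fun w => p w = i)).card / 2)
      (fun _ _ => Nat.zero_le _) (Finset.mem_univ i)).trans hM
  choose I hI hind hc using fun i => comp_aux H htri _ (hle i)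
  have hIp : ∀ i, ∀ w ∈ I i, p w = i := fun i w hw => by simpa using hI i hw
  refine ⟨Finset.univ.biUnion I, ?_, ?_⟩
  · intro a ha b hb hab
    simp only [Finset.mem_biUnion, Finset.mem_univ, true_and] at ha hb
    obtain ⟨i, ha⟩ := ha
    obtain ⟨j, hb⟩ := hb
    have hij : i = j := by rw [← hIp i a ha, ← hIp j b hb, hp a b hab]
    subst hij
    exact hind i a ha b hb hab
  · rw [Finset.card_biUnion]
    · have hW : Fintype.card W = ∑ i, (Finset.univ.filter (fun w => p w = i)).card :=
        Finset.card_eq_sum_card_fiberwise (fun _ _ => Finset.mem_univ _)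
      have h1 := Finset.sum_le_sum (fun i (_ : i ∈ Finset.univ) => hc i)
      rw [Finset.sum_add_distrib, Finset.sum_add_distrib] at h1
      have h2 : 2 * ∑ i, (Finset.univ.filter (fun w => p w = i)).card / 2 / 2 ≤
          ∑ i, (Finset.univ.filter (fun w => p w = i)).card / 2 := by
        rw [Finset.mul_sum]
        exact Finset.sum_le_sum (fun i _ => by omega)
      omega
    · intro i _ j _ hij
      rw [Function.onFun, Finset.disjoint_left]
      intro w hw hw'
      exact hij ((hIp i w hw).symm.trans (hIp j w hw'))

/-- Independent set of a triangle-free graph in terms of the component sizes. -/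
theorem components_aux {W : Type} [Fintype W] (K : SimpleGraph W)
    (htri : ∀ a b c, K.Adj a b → K.Adj b c → ¬ K.Adj a c)
    (hW : Fintype.card W ≤ K.oddComponents.ncard + 11) :
    ∃ (I : Finset W) (M : ℕ), (∀ a ∈ I, ∀ b ∈ I, ¬ K.Adj a b) ∧
      Fintype.card W = 2 * M + K.oddComponents.ncard ∧
      Fintype.card W ≤ I.card + M + M / 2 := by
  classical
  have hfib : ∀ c : K.ConnectedComponent, c.supp.ncard =
      (Finset.univ.filter (fun w => K.connectedComponentMk w = c)).card := by
    intro c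
    rw [← Set.ncard_coe_finset]
    congr 1
    ext w
    simp
  have hodd : K.oddComponents.ncard =
      ∑ c, (Finset.univ.filter (fun w => K.connectedComponentMk w = c)).card % 2 := by
    have : K.oddComponents = ((Finset.univ.filter (fun c : K.ConnectedComponent =>
        Odd c.supp.ncard) : Finset _) : Set _) := by
      ext c; simp
    rw [this, Set.ncard_coe_finset, Finset.card_filter]
    refine Finset.sum_congr rfl (fun c _ => ?_)
    rw [hfib c]
    split_ifs with h
    · rw [Nat.odd_iff] at h; omega
    · rw [Nat.odd_iff] at h; omega
  have hcard : Fintype.card W =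
      ∑ c, (Finset.univ.filter (fun w => K.connectedComponentMk w = c)).card :=
    Finset.card_eq_sum_card_fiberwise (fun _ _ => Finset.mem_univ _)
  have hsum : Fintype.card W =
      2 * ∑ c, (Finset.univ.filter (fun w => K.connectedComponentMk w = c)).card / 2
        + K.oddComponents.ncard := by
    rw [hodd, hcard, Finset.mul_sum, ← Finset.sum_add_distrib]
    exact Finset.sum_congr rfl (fun c _ => by omega)
  obtain ⟨I, h1, h2⟩ := glue_aux K htri K.connectedComponentMk
    (fun a b h => SimpleGraph.ConnectedComponent.sound h.reachable) (by omega)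
  exact ⟨I, _, h1, hsum, h2⟩

/-- The graph `H` with `d` new universal vertices. -/
def addUniv {V : Type} (H : SimpleGraph V) (d : ℕ) : SimpleGraph (V ⊕ Fin d) where
  Adj x y := x ≠ y ∧ ∀ a b, x = Sum.inl a → y = Sum.inl b → H.Adj a b
  symm := ⟨fun _ _ h => ⟨h.1.symm, fun a b ha hb => (h.2 b a hb ha).symm⟩⟩
  loopless := ⟨fun _ h => h.1 rfl⟩

theorem no_matching {V : Type} [Fintype V] (G : SimpleGraph V) (r d : ℕ)
    (hcol : ¬ G.Colorable r) (hd : Fintype.card V + d = 2 * r) :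
    ∀ M : (addUniv Gᶜ d).Subgraph, ¬ M.IsPerfectMatching := by
  classical
  intro M hM
  apply hcol
  have hdeg : ∀ v, M.spanningCoe.degree v = 1 := by
    intro v
    rw [SimpleGraph.degree_eq_one_iff_existsUnique_adj]
    exact (SimpleGraph.Subgraph.isPerfectMatching_iff.mp hM) v
  have hE := M.spanningCoe.sum_degrees_eq_twice_card_edges
  simp only [hdeg, Finset.sum_const, Finset.card_univ, Fintype.card_sum, Fintype.card_fin,
    smul_eq_mul, mul_one] at hE
  have hEr : Fintype.card M.spanningCoe.edgeSet = r := by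
    rw [← SimpleGraph.edgeFinset_card]; omega
  choose f hf _ using SimpleGraph.Subgraph.isPerfectMatching_iff.mp hM
  rw [← hEr]
  refine SimpleGraph.Coloring.colorable (SimpleGraph.Coloring.mk
    (fun v => (⟨s(Sum.inl v, f (Sum.inl v)), hf (Sum.inl v)⟩ : M.spanningCoe.edgeSet)) ?_)
  intro v w hvw heq
  have heq' := congrArg Subtype.val heq
  simp only [Sym2.eq_iff] at heq'
  rcases heq' with ⟨h, _⟩ | ⟨h1, h2⟩
  · exact hvw.ne (Sum.inl_injective h)
  · have := hf (Sum.inl v)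
    rw [h2] at this
    exact ((M.adj_sub this).2 v w rfl rfl).2 hvw

/-- The case of independence number at most two. -/
theorem alpha_two {V : Type} [Fintype V] (G : SimpleGraph V) (r e : ℕ)
    (he : 1 ≤ e) (he3 : e ≤ 3)
    (hα : ∀ a b c, Gᶜ.Adj a b → Gᶜ.Adj b c → ¬ Gᶜ.Adj a c)
    (hcol : ¬ G.Colorable r) (hn : Fintype.card V ≤ r + 2 * e) :
    ∃ s : Finset V, G.IsClique s ∧ r + 2 ≤ s.card + e := by
  classical
  by_cases h2 : 2 * r + 1 ≤ Fintype.card V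
  · obtain ⟨I, -, hI, hc⟩ := ramsey_aux Gᶜ hα (r + 2 - e) Finset.univ (by
      rw [Finset.card_univ]
      generalize Fintype.card V = n at *
      have : r ≤ 5 := by omega
      interval_cases e <;> interval_cases r <;> simp <;> omega)
    refine ⟨I, ?_, by omega⟩
    intro a ha b hb hab
    by_contra h
    exact hI a ha b hb ⟨hab, h⟩
  · obtain ⟨d, hd⟩ : ∃ d, Fintype.card V + d = 2 * r := ⟨2 * r - Fintype.card V, by omega⟩
    have hVd : Nat.card (V ⊕ Fin d) = 2 * r := by simp [hd]
    obtain ⟨S, hS⟩ := SimpleGraph.exists_isTutteViolator (no_matching G r d hcol hd)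
      (by rw [hVd]; simp)
    unfold SimpleGraph.IsTutteViolator at hS
    have hverts : ((⊤ : (addUniv Gᶜ d).Subgraph).deleteVerts S).verts = Sᶜ := by
      ext x; simp
    have hcardW : Fintype.card ((⊤ : (addUniv Gᶜ d).Subgraph).deleteVerts S).verts
        + S.ncard = 2 * r := by
      rw [← Nat.card_eq_fintype_card, Nat.card_coe_set_eq, hverts, ← hVd, add_comm]
      exact Set.ncard_add_ncard_compl S
    have hadj : ∀ a b : ((⊤ : (addUniv Gᶜ d).Subgraph).deleteVerts S).verts,
        ((⊤ : (addUniv Gᶜ d).Subgraph).deleteVerts S).coe.Adj a b ↔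
          (addUniv Gᶜ d).Adj a.1 b.1 := by
      rintro ⟨a, ha⟩ ⟨b, hb⟩
      rw [hverts] at ha hb
      simp only [Set.mem_compl_iff] at ha hb
      simp [ha, hb]
    have hmem : ∀ a : ((⊤ : (addUniv Gᶜ d).Subgraph).deleteVerts S).verts, a.1 ∉ S := by
      rintro ⟨a, ha⟩
      rw [hverts] at ha
      exact ha
    have hparity := SimpleGraph.odd_ncard_oddComponents
      (G := ((⊤ : (addUniv Gᶜ d).Subgraph).deleteVerts S).coe)
    rw [Nat.card_eq_fintype_card] at hparity
    have huniv : ∀ i, (Sum.inr i : V ⊕ Fin d) ∈ S := by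
      intro i
      by_contra hi
      have hiW : Sum.inr i ∈ ((⊤ : (addUniv Gᶜ d).Subgraph).deleteVerts S).verts := by
        rw [hverts]; exact hi
      have hreach : ∀ x, ((⊤ : (addUniv Gᶜ d).Subgraph).deleteVerts S).coe.connectedComponentMk x
          = ((⊤ : (addUniv Gᶜ d).Subgraph).deleteVerts S).coe.connectedComponentMk
            ⟨Sum.inr i, hiW⟩ := by
        intro x
        by_cases hx : x = ⟨Sum.inr i, hiW⟩
        · rw [hx]
        · apply SimpleGraph.ConnectedComponent.sound
          apply SimpleGraph.Adj.reachable
          rw [hadj]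
          exact ⟨fun h => hx (Subtype.ext h), fun a b _ h => by simp at h⟩
      have hle : ((⊤ : (addUniv Gᶜ d).Subgraph).deleteVerts S).coe.oddComponents.ncard ≤ 1 := by
        rw [Set.ncard_le_one_iff]
        intro a b _ _
        induction a using SimpleGraph.ConnectedComponent.ind with | _ a =>
        induction b using SimpleGraph.ConnectedComponent.ind with | _ b =>
        rw [hreach a, hreach b]
      rw [Nat.odd_iff, Nat.odd_iff] at hparity
      omega
    have hSd : d ≤ S.ncard := by
      have : (Set.range (Sum.inr : Fin d → V ⊕ Fin d)).ncard = d := by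
        rw [← Set.image_univ, Set.ncard_image_of_injective _ Sum.inr_injective]
        simp
      refine this.symm.le.trans ?_
      exact Set.ncard_le_ncard (by rintro _ ⟨i, rfl⟩; exact huniv i) (Set.toFinite _)
    have hex : ∀ a : ((⊤ : (addUniv Gᶜ d).Subgraph).deleteVerts S).verts,
        ∃ v : V, a.1 = Sum.inl v := by
      intro a
      have := hmem a
      rcases h : a.1 with v | i
      · exact ⟨v, rfl⟩
      · rw [h] at this; exact absurd (huniv i) this
    choose g hg using hex
    have hadj' : ∀ a b, ((⊤ : (addUniv Gᶜ d).Subgraph).deleteVerts S).coe.Adj a b ↔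
        Gᶜ.Adj (g a) (g b) := by
      intro a b
      rw [hadj, hg a, hg b]
      constructor
      · intro h
        exact h.2 _ _ rfl rfl
      · intro h
        refine ⟨fun h' => h.ne (Sum.inl_injective h'), ?_⟩
        intro x y hx hy
        rw [← Sum.inl_injective hx, ← Sum.inl_injective hy]
        exact h
    have hginj : Function.Injective g := fun a b h => Subtype.ext (by rw [hg a, hg b, h])
    obtain ⟨I, M, hI, hM1, hM2⟩ := components_aux
      ((⊤ : (addUniv Gᶜ d).Subgraph).deleteVerts S).coe (by
        intro a b c
        rw [hadj', hadj', hadj']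
        exact hα _ _ _) (by omega)
    refine ⟨I.image g, ?_, ?_⟩
    · intro x hx y hy hxy
      simp only [Finset.coe_image, Set.mem_image, Finset.mem_coe] at hx hy
      obtain ⟨a, ha, rfl⟩ := hx
      obtain ⟨b, hb, rfl⟩ := hy
      by_contra h
      exact hI a ha b hb ((hadj' a b).mpr ⟨hxy, h⟩)
    · rw [Finset.card_image_of_injective _ hginj]
      omega

theorem main_aux (e : ℕ) : ∀ (_ : e ≤ 3) (V : Type) [Fintype V] (G : SimpleGraph V) (r : ℕ)
    (_ : ¬ G.Colorable r) (_ : Fintype.card V ≤ r + 2 * e),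
    ∃ s : Finset V, G.IsClique s ∧ r + 2 ≤ s.card + e := by
  classical
  induction e with
  | zero =>
    intro _ V _ G r hcol hn
    exact absurd (G.colorable_of_fintype.mono (by omega)) hcol
  | succ e ih =>
    intro he V _ G r hcol hn
    by_cases hα : ∀ a b c, Gᶜ.Adj a b → Gᶜ.Adj b c → ¬ Gᶜ.Adj a c
    · exact alpha_two G r (e + 1) (by omega) he hα hcol hn
    push Not at hα
    obtain ⟨a, b, c, hab, hbc, hac⟩ := hα
    rcases r with _ | r
    · exact ⟨{a}, by simp, by rw [Finset.card_singleton]; omega⟩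
    have hA : Fintype.card {v : V // v ∉ ({a, b, c} : Finset V)} + 3 = Fintype.card V := by
      have h3 : ({a, b, c} : Finset V).card = 3 := by
        rw [Finset.card_eq_three]
        exact ⟨a, b, c, hab.ne, hac.ne, hbc.ne, rfl⟩
      have := Finset.card_add_card_compl ({a, b, c} : Finset V)
      rw [Fintype.card_subtype_compl, Fintype.card_coe]
      omega
    obtain ⟨s, hs, hsc⟩ := ih (by omega) {v : V // v ∉ ({a, b, c} : Finset V)}
      (G.comap Subtype.val) r (by
        rintro ⟨C⟩
        apply hcol
        refine ⟨SimpleGraph.Coloring.mk (fun v =>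
          if h : v ∉ ({a, b, c} : Finset V) then (C ⟨v, h⟩).castSucc else Fin.last r) ?_⟩
        intro v w hvw
        by_cases hv : v ∉ ({a, b, c} : Finset V) <;> by_cases hw : w ∉ ({a, b, c} : Finset V)
        · simp only [hv, hw, not_false_eq_true, dite_true]
          intro h
          exact C.valid (v := ⟨v, hv⟩) (w := ⟨w, hw⟩) hvw (Fin.castSucc_injective _ h)
        · rw [dif_pos hv, dif_neg hw]
          exact (Fin.castSucc_lt_last _).ne
        · rw [dif_neg hv, dif_pos hw]
          exact (Fin.castSucc_lt_last _).ne'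
        · exfalso
          have hab' := hab.2
          have hbc' := hbc.2
          have hac' := hac.2
          simp only [not_not, Finset.mem_insert, Finset.mem_singleton] at hv hw
          rcases hv with rfl | rfl | rfl <;> rcases hw with rfl | rfl | rfl <;>
            first
              | exact hvw.ne rfl
              | exact hab' hvw
              | exact hbc' hvw
              | exact hac' hvw
              | exact hab' hvw.symm
              | exact hbc' hvw.symm
              | exact hac' hvw.symm) (by omega)
    refine ⟨s.map (Function.Embedding.subtype _), ?_, by rw [Finset.card_map]; omega⟩
    intro x hx y hy hxy
    simp only [Finset.coe_map, Set.mem_image, Finset.mem_coe] at hx hy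
    obtain ⟨x, hx, rfl⟩ := hx
    obtain ⟨y, hy, rfl⟩ := hy
    exact hs hx hy (fun h => hxy (by rw [h]))

theorem first_part (r : ℕ) (hr : 4 ≤ r) (V : Type) [Fintype V] (G : SimpleGraph V)
    (hq : G.CliqueFree (r - 1)) (hχ : (r + 1 : ℕ∞) ≤ G.chromaticNumber) :
    r + 7 ≤ Fintype.card V := by
  by_contra hlt
  have hcol : ¬ G.Colorable r := by
    intro h
    have h1 := hχ.trans h.chromaticNumber_le
    have h2 : r + 1 ≤ r := by exact_mod_cast h1
    omega
  obtain ⟨s, hs, hc⟩ := main_aux 3 le_rfl V G r hcol (by omega)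
  exact (hq.mono (show r - 1 ≤ s.card by omega)) s ⟨hs, rfl⟩

/-- The shift graph. -/
def shiftGraph (N : ℕ) : SimpleGraph (Fin N × Fin N) where
  Adj x y := x.1 < x.2 ∧ y.1 < y.2 ∧ (x.2 = y.1 ∨ y.2 = x.1)
  symm := ⟨fun _ _ h => ⟨h.2.1, h.1, h.2.2.symm⟩⟩
  loopless := ⟨fun x h => by
    obtain ⟨h1, _, h2 | h2⟩ := h
    · exact h1.ne h2.symm
    · exact h1.ne h2.symm⟩

theorem shift_cliqueFree (N : ℕ) : (shiftGraph N).CliqueFree 3 := by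
  classical
  intro s hs
  rw [SimpleGraph.is3Clique_iff] at hs
  obtain ⟨a, b, c, hab, hac, hbc, -⟩ := hs
  obtain ⟨h1, h2, h3⟩ := hab
  obtain ⟨-, h5, h6⟩ := hac
  obtain ⟨-, -, h9⟩ := hbc
  simp only [Fin.lt_def, Fin.ext_iff] at *
  omega

theorem shift_not_colorable (r : ℕ) : ¬ (shiftGraph (2 ^ r + 1)).Colorable r := by
  classical
  rintro ⟨C⟩
  let S : Fin (2 ^ r + 1) → Finset (Fin r) := fun i =>
    Finset.univ.filter (fun c => ∃ j, i < j ∧ C (i, j) = c)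
  have hlt : ∀ i j, i < j → S i ≠ S j := by
    intro i j hij h
    have h1 : C (i, j) ∈ S i := by
      simp only [S, Finset.mem_filter, Finset.mem_univ, true_and]
      exact ⟨j, hij, rfl⟩
    rw [h] at h1
    simp only [S, Finset.mem_filter, Finset.mem_univ, true_and] at h1
    obtain ⟨k, hjk, hk⟩ := h1
    exact C.valid (v := (j, k)) (w := (i, j)) ⟨hjk, hij, Or.inr rfl⟩ hk
  have hinj : Function.Injective S := by
    intro i j h
    rcases lt_trichotomy i j with h1 | h1 | h1
    · exact absurd h (hlt i j h1)
    · exact h1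
    · exact absurd h.symm (hlt j i h1)
  have := Fintype.card_le_of_injective S hinj
  simp at this

theorem folkman_nonempty (r : ℕ) (hr : 4 ≤ r) : {n : ℕ | ∃ G : SimpleGraph (Fin n),
    G.CliqueFree (r - 1) ∧ (r + 1 : ℕ∞) ≤ G.chromaticNumber}.Nonempty := by
  let N := 2 ^ r + 1
  let φ := (Fintype.equivFin (Fin N × Fin N)).symm
  refine ⟨Fintype.card (Fin N × Fin N), (shiftGraph N).comap φ, ?_, ?_⟩
  · have h3 : ((shiftGraph N).comap φ).CliqueFree 3 :=
      (shift_cliqueFree N).comap (SimpleGraph.Iso.comap φ (shiftGraph N)).toEmbedding.isContained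
    exact h3.mono (by omega)
  · have hnc : ¬ ((shiftGraph N).comap φ).Colorable r := fun h =>
      shift_not_colorable r
        (h.of_hom (SimpleGraph.Iso.comap φ (shiftGraph N)).symm.toEmbedding.toHom)
    by_contra hlt
    push Not at hlt
    apply hnc
    rw [← SimpleGraph.chromaticNumber_le_iff_colorable]
    exact Order.le_of_lt_add_one hlt

theorem stmt_0 (r : ℕ) (hr : 4 ≤ r) :
    (∀ (V : Type) [Fintype V] (G : SimpleGraph V),
        G.CliqueFree (r - 1) → (r + 1 : ℕ∞) ≤ G.chromaticNumber →
        r + 7 ≤ Fintype.card V) ∧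
    r + 7 ≤ folkman r (r - 1) := by
  refine ⟨fun V _ G h1 h2 => first_part r hr V G h1 h2, ?_⟩
  obtain ⟨G, h1, h2⟩ := Nat.sInf_mem (folkman_nonempty r hr)
  have := first_part r hr _ G h1 h2
  rwa [Fintype.card_fin] at this
end

section
/- For every integer r ≥ 6, the vertex Folkman number F_v(2_r; r−1) equals r+7; that is, every K_{r−1}-free finite simple graph G with χ(G) ≥ r+1 has at least r+7 vertices, and there exists a K_{r−1}-free finite simple graph on exactly r+7 vertices with chromatic number at least r+1. -/
open SimpleGraph

set_option linter.unusedSectionVars false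

namespace FolkmanAux

/-- `f` is a matching of `H` on the vertex set `S`, encoded as an involution. -/
structure Mat {V : Type} (H : SimpleGraph V) (S : Finset V) (f : V → V) : Prop where
  inv : ∀ v, f (f v) = v
  adj : ∀ v, f v ≠ v → v ∈ S ∧ H.Adj v (f v)

/-- `T` is independent in `H`. -/
def Ind {V : Type} (H : SimpleGraph V) (T : Finset V) : Prop :=
  ∀ a ∈ T, ∀ b ∈ T, ¬ H.Adj a b

/-- `H` has no triangle. -/
def TriFree {V : Type} (H : SimpleGraph V) : Prop :=
  ∀ a b c, H.Adj a b → H.Adj b c → H.Adj a c → False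

/-- Covered vertices of a matching. -/
def supp {V : Type} [Fintype V] [LinearOrder V] (f : V → V) : Finset V :=
  Finset.univ.filter (fun v => f v ≠ v)

/-- Lower endpoints of a matching. -/
def low {V : Type} [Fintype V] [LinearOrder V] (f : V → V) : Finset V :=
  Finset.univ.filter (fun v => v < f v)

section ramsey
variable {V : Type} [LinearOrder V] {H : SimpleGraph V}

lemma ramsey_step (hH : TriFree H) (k m : ℕ)
    (h : ∀ S : Finset V, m ≤ S.card → ∃ T ⊆ S, Ind H T ∧ k ≤ T.card)
    (S : Finset V) (hS : m + (k + 1) ≤ S.card) :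
    ∃ T ⊆ S, Ind H T ∧ k + 1 ≤ T.card := by
  classical
  have hne : S.Nonempty := by
    rw [← Finset.card_pos]; omega
  obtain ⟨v, hv⟩ := hne
  by_cases hc : k + 1 ≤ (S.filter (fun w => H.Adj v w)).card
  · refine ⟨_, Finset.filter_subset _ _, ?_, hc⟩
    intro a ha b hb hab
    simp only [Finset.mem_filter] at ha hb
    exact hH v a b ha.2 hab hb.2
  · have h1 := Finset.card_filter_add_card_filter_not (s := S) (fun w => H.Adj v w)
    have hvm : v ∈ S.filter (fun w => ¬ H.Adj v w) := by simp [hv]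
    have h2 := Finset.card_erase_add_one hvm
    obtain ⟨T, hT, hI, hk⟩ := h ((S.filter (fun w => ¬ H.Adj v w)).erase v) (by omega)
    have hvT : v ∉ T := fun hh => by simpa using hT hh
    refine ⟨insert v T, ?_, ?_, ?_⟩
    · intro a ha
      rcases Finset.mem_insert.1 ha with rfl | ha
      · exact hv
      · have := hT ha
        simp only [Finset.mem_erase, Finset.mem_filter] at this
        exact this.2.1
    · have key : ∀ a ∈ T, ¬ H.Adj v a := by
        intro a ha
        have := hT ha
        simp only [Finset.mem_erase, Finset.mem_filter] at this
        exact this.2.2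
      intro a ha b hb hab
      rcases Finset.mem_insert.1 ha with ha1 | ha1 <;>
        rcases Finset.mem_insert.1 hb with hb1 | hb1
      · subst ha1; subst hb1; exact H.loopless.irrefl _ hab
      · subst ha1; exact key b hb1 hab
      · subst hb1; exact key a ha1 hab.symm
      · exact hI a ha1 b hb1 hab
    · rw [Finset.card_insert_of_notMem hvT]; omega

lemma ramsey0 (H : SimpleGraph V) (S : Finset V) : ∃ T ⊆ S, Ind H T ∧ 0 ≤ T.card :=
  ⟨∅, by simp, by simp [Ind], by simp⟩

lemma ramsey1 (hH : TriFree H) (S : Finset V) (hS : 1 ≤ S.card) :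
    ∃ T ⊆ S, Ind H T ∧ 1 ≤ T.card :=
  ramsey_step hH 0 0 (fun S _ => ramsey0 H S) S hS

lemma ramsey2 (hH : TriFree H) (S : Finset V) (hS : 3 ≤ S.card) :
    ∃ T ⊆ S, Ind H T ∧ 2 ≤ T.card :=
  ramsey_step hH 1 1 (ramsey1 hH) S hS

lemma ramsey3 (hH : TriFree H) (S : Finset V) (hS : 6 ≤ S.card) :
    ∃ T ⊆ S, Ind H T ∧ 3 ≤ T.card :=
  ramsey_step hH 2 3 (ramsey2 hH) S hS

lemma ramsey4 (hH : TriFree H) (S : Finset V) (hS : 10 ≤ S.card) :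
    ∃ T ⊆ S, Ind H T ∧ 4 ≤ T.card :=
  ramsey_step hH 3 6 (ramsey3 hH) S hS

lemma ramsey_small (hH : TriFree H) (S : Finset V) (N : ℕ) (hN : N ≤ 5)
    (hS : S.card ≤ 2 * N + 1) :
    ∃ T ⊆ S, Ind H T ∧ S.card ≤ T.card + N + N / 2 := by
  rcases Nat.lt_or_ge S.card 1 with h | h
  · obtain ⟨T, h1, h2, h3⟩ := ramsey0 H S
    exact ⟨T, h1, h2, by omega⟩
  rcases Nat.lt_or_ge S.card 3 with h | h
  · obtain ⟨T, h1, h2, h3⟩ := ramsey1 hH S (by omega)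
    exact ⟨T, h1, h2, by omega⟩
  rcases Nat.lt_or_ge S.card 6 with h | h
  · obtain ⟨T, h1, h2, h3⟩ := ramsey2 hH S (by omega)
    exact ⟨T, h1, h2, by omega⟩
  rcases Nat.lt_or_ge S.card 10 with h | h
  · obtain ⟨T, h1, h2, h3⟩ := ramsey3 hH S (by omega)
    exact ⟨T, h1, h2, by omega⟩
  · obtain ⟨T, h1, h2, h3⟩ := ramsey4 hH S (by omega)
    exact ⟨T, h1, h2, by omega⟩

end ramsey

section matching
variable {V : Type} [Fintype V] [LinearOrder V] {H : SimpleGraph V}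

lemma mem_supp {f : V → V} {v : V} : v ∈ supp f ↔ f v ≠ v := by simp [supp]

lemma supp_card {f : V → V} (hf : ∀ v, f (f v) = v) : (supp f).card = 2 * (low f).card := by
  have h1 : supp f = low f ∪ (low f).image f := by
    ext v
    simp only [supp, low, Finset.mem_union, Finset.mem_image, Finset.mem_filter,
      Finset.mem_univ, true_and]
    constructor
    · intro h
      rcases lt_or_gt_of_ne h with h | h
      · exact Or.inr ⟨f v, by rwa [hf], hf v⟩
      · exact Or.inl h
    · rintro (h | ⟨w, h, rfl⟩)
      · exact h.ne'
      · rw [hf]; exact h.ne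
  have h2 : Disjoint (low f) ((low f).image f) := by
    rw [Finset.disjoint_left]
    simp only [low, Finset.mem_image, Finset.mem_filter,
      Finset.mem_univ, true_and]
    rintro v h ⟨w, h', rfl⟩
    rw [hf] at h
    exact absurd h (not_lt.2 h'.le)
  have h3 : Function.Injective f := fun a b h => by rw [← hf a, h, hf]
  rw [h1, Finset.card_union_of_disjoint h2, Finset.card_image_of_injective _ h3]
  omega

/-- Add the edge `xy`, dropping the old edge at `y` (if any). -/
def upd (g : V → V) (x y : V) : V → V :=
  fun w => if w = x then y else if w = y then x else if w = g y then g y else g w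

lemma Mat.upd {S : Finset V} {g : V → V} (hg : Mat H S g) {x y : V} (hx : g x = x)
    (hxS : x ∈ S) (hyS : y ∈ S) (hxy : H.Adj x y) : Mat H S (upd g x y) := by
  have hne := hxy.ne
  have h1 := hg.inv
  have h2 := hg.adj
  have h3 := hxy.symm
  constructor
  · intro v
    have := h1 v
    have := h1 y
    unfold FolkmanAux.upd
    grind
  · intro v hv
    have := h2 v
    unfold FolkmanAux.upd at hv ⊢
    grind

/-- Maximum matchings. -/
def IsMax (H : SimpleGraph V) (S : Finset V) (f : V → V) : Prop :=
  Mat H S f ∧ ∀ g, Mat H S g → (supp g).card ≤ (supp f).card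

lemma max_no_add {S : Finset V} {g : V → V} (hg : IsMax H S g) {x y : V} (hxS : x ∈ S)
    (hyS : y ∈ S) (hxy : H.Adj x y) (hx : g x = x) (hy : g y = y) : False := by
  have h1 := hg.2 _ (hg.1.upd hx hxS hyS hxy)
  have hne := hxy.ne
  have : supp g ⊂ supp (upd g x y) := by
    rw [Finset.ssubset_iff_of_subset]
    · refine ⟨x, ?_, ?_⟩
      · rw [mem_supp]; unfold upd; grind
      · rw [mem_supp]; simpa using hx
    · intro v
      rw [mem_supp, mem_supp]; unfold upd; grind
  have := Finset.card_lt_card this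
  omega

lemma gallai {S : Finset V} {u t v : V} (huv : u ≠ v)
    (h1 : ∀ f, IsMax H S f → f u = u → f t = t → False)
    (h2 : ∀ f, IsMax H S f → f t = t → f v = v → False)
    (ht : ∃ g, IsMax H S g ∧ g t = t) :
    ∀ f, IsMax H S f → f u = u → f v = v → False := by
  intro f hf hfu hfv
  obtain ⟨g, ⟨hg, hgt⟩, hmax⟩ := Set.exists_max_image {g | IsMax H S g ∧ g t = t}
    (fun g => (Finset.univ.filter (fun w => g w = f w)).card) (Set.toFinite _) ht
  have hgu : g u ≠ u := fun h => h1 g hg h hgt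
  have hgv : g v ≠ v := fun h => h2 g hg hgt h
  have hcard : (supp f).card = (supp g).card := le_antisymm (hg.2 _ hf.1) (hf.2 _ hg.1)
  have hsd := Finset.card_sdiff_comm hcard
  have h3 : ({u, v} : Finset V) ⊆ supp g \ supp f := by
    intro w hw
    simp only [Finset.mem_insert, Finset.mem_singleton] at hw
    rw [Finset.mem_sdiff, mem_supp, mem_supp]
    grind
  have h4 := Finset.card_le_card h3
  rw [Finset.card_pair huv] at h4
  obtain ⟨x, hx, hxt⟩ := Finset.exists_mem_ne (s := supp f \ supp g) (by omega) t
  rw [Finset.mem_sdiff, mem_supp, mem_supp, not_not] at hx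
  obtain ⟨hfx, hgx⟩ := hx
  obtain ⟨hxS, hadj⟩ := hf.1.adj x hfx
  have hffx := hf.1.inv x
  have hyS : f x ∈ S := (hf.1.adj (f x) (by rw [hffx]; exact fun h => hfx h.symm)).1
  have hgy : g (f x) ≠ f x := fun h => max_no_add hg hxS hyS hadj hgx h
  have hggy := hg.1.inv (f x)
  have hM := hg.1.upd hgx hxS hyS hadj
  have hsc : (supp g).card ≤ (supp (upd g x (f x))).card := by
    have e : insert x ((supp g).erase (g (f x))) ⊆ supp (upd g x (f x)) := by
      intro w
      rw [Finset.mem_insert, Finset.mem_erase, mem_supp, mem_supp]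
      unfold upd
      grind
    have e1 := Finset.card_le_card e
    rw [Finset.card_insert_of_notMem, Finset.card_erase_add_one] at e1
    · exact e1
    · rw [mem_supp]; grind
    · rw [Finset.mem_erase, mem_supp]; grind
  have hMax : IsMax H S (upd g x (f x)) := ⟨hM, fun k hk => (hg.2 k hk).trans hsc⟩
  have hT : upd g x (f x) t = t := by unfold upd; grind
  have h5 := hmax _ ⟨hMax, hT⟩
  have h6 : Finset.univ.filter (fun w => g w = f w) ⊂
      Finset.univ.filter (fun w => upd g x (f x) w = f w) := by
    rw [Finset.ssubset_iff_of_subset]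
    · refine ⟨x, ?_, ?_⟩
      · simp only [Finset.mem_filter, Finset.mem_univ, true_and]; unfold upd; grind
      · simp only [Finset.mem_filter, Finset.mem_univ, true_and]; grind
    · intro w
      simp only [Finset.mem_filter, Finset.mem_univ, true_and]
      have := hg.1.inv w
      have := hf.1.inv w
      unfold upd; grind
  have := Finset.card_lt_card h6
  omega

lemma exists_max (H : SimpleGraph V) (S : Finset V) : ∃ f, IsMax H S f := by
  obtain ⟨f, hf, hm⟩ := Set.exists_max_image {g | Mat H S g}
    (fun g => (supp g).card) (Set.toFinite _) ⟨id, ⟨by simp, by simp⟩⟩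
  exact ⟨f, hf, hm⟩

lemma Mat.supp_sub {S : Finset V} {f : V → V} (hf : Mat H S f) : supp f ⊆ S :=
  fun v hv => (hf.adj v (mem_supp.1 hv)).1

lemma Mat.mono {S S' : Finset V} {f : V → V} (hf : Mat H S f) (h : S ⊆ S') : Mat H S' f :=
  ⟨hf.inv, fun v hv => ⟨h (hf.adj v hv).1, (hf.adj v hv).2⟩⟩

lemma Mat.glue {A B : Finset V} {f g : V → V} (hf : Mat H A f) (hg : Mat H B g)
    (hAB : Disjoint A B) : ∃ k, Mat H (A ∪ B) k ∧
      (supp k).card = (supp f).card + (supp g).card := by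
  have hd : ∀ v, v ∈ A → v ∈ B → False := fun v h1 h2 => Finset.disjoint_left.1 hAB h1 h2
  have hfa : ∀ v, f v ≠ v → v ∈ A := fun v hv => (hf.adj v hv).1
  have hga : ∀ v, g v ≠ v → v ∈ B := fun v hv => (hg.adj v hv).1
  refine ⟨fun v => if f v = v then g v else f v, ⟨?_, ?_⟩, ?_⟩
  · intro v
    have := hf.inv v
    have := hg.inv v
    have := hfa v
    have := hga v
    have := hfa (g v)
    have := hga (g v)
    grind
  · intro v hv
    have := hf.adj v
    have := hg.adj v
    rw [Finset.mem_union]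
    grind
  · rw [← Finset.card_union_of_disjoint]
    · congr 1
      ext v
      rw [Finset.mem_union, mem_supp, mem_supp, mem_supp]
      have := hfa v
      have := hga v
      grind
    · exact Finset.disjoint_of_subset_left hf.supp_sub
        (Finset.disjoint_of_subset_right hg.supp_sub hAB)

lemma main_ind (hH : TriFree H) (S : Finset V) : ∀ N ≤ 5,
    (∀ f, Mat H S f → (supp f).card ≤ 2 * N) →
    ∃ T ⊆ S, Ind H T ∧ S.card ≤ T.card + N + N / 2 := by
  induction S using Finset.strongInduction with
  | H S ih =>
  intro N0 hN0 hb
  obtain ⟨f, hf⟩ := exists_max H S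
  obtain ⟨N, hN⟩ : ∃ N, (supp f).card = 2 * N := ⟨_, supp_card hf.1.inv⟩
  have hNN : N ≤ N0 := by have := hb f hf.1; omega
  suffices ∃ T ⊆ S, Ind H T ∧ S.card ≤ T.card + N + N / 2 by
    obtain ⟨T, h1, h2, h3⟩ := this
    exact ⟨T, h1, h2, by omega⟩
  by_cases hA : ∃ v ∈ S, ∀ g, IsMax H S g → g v ≠ v
  · obtain ⟨v, hv, hcov⟩ := hA
    have key : ∀ g, Mat H (S.erase v) g → (supp g).card < 2 * N := by
      intro g hg
      have hg' := hg.mono (Finset.erase_subset v S)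
      by_contra hlt
      refine hcov g ⟨hg', fun k hk => (hf.2 k hk).trans (by omega)⟩ ?_
      by_contra hne
      simpa using (hg.adj v hne).1
    have hN1 : 0 < N := by
      have := key id ⟨by simp, by simp⟩
      omega
    obtain ⟨T, h1, h2, h3⟩ := ih (S.erase v) (Finset.erase_ssubset hv) (N - 1) (by omega) (by
      intro g hg
      have e1 := key g hg
      have e2 := supp_card hg.inv
      omega)
    have := Finset.card_erase_add_one hv
    exact ⟨T, h1.trans (Finset.erase_subset _ _), h2, by omega⟩
  push Not at hA
  by_cases hB : ∃ u ∈ S, ∃ v ∈ S, u ≠ v ∧ ∃ g, IsMax H S g ∧ g u = u ∧ g v = v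
  · obtain ⟨u, hu, v, hv, huv, g0, hg0, hg0u, hg0v⟩ := hB
    classical
    let R : V → Prop := fun w => u = w ∨ ∀ g, IsMax H S g → g u = u → g w = w → False
    let A := S.filter R
    let B := S.filter (fun w => ¬ R w)
    have hAB : A ∪ B = S := Finset.filter_union_filter_not_eq _ _
    have hdis : Disjoint A B := Finset.disjoint_filter_filter_not _ _ _
    have hc : A.card + B.card = S.card := by
      rw [← Finset.card_union_of_disjoint hdis, hAB]
    have huA : u ∈ A := by simp [A, R, hu]
    have hvB : v ∈ B := by
      simp only [B, R, Finset.mem_filter]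
      refine ⟨hv, ?_⟩
      rintro (h | h)
      · exact huv h
      · exact h g0 hg0 hg0u hg0v
    have hAs : A ⊂ S := by
      rw [Finset.ssubset_iff_of_subset (Finset.filter_subset _ _)]
      exact ⟨v, hv, fun h => Finset.disjoint_left.1 hdis h hvB⟩
    have hBs : B ⊂ S := by
      rw [Finset.ssubset_iff_of_subset (Finset.filter_subset _ _)]
      exact ⟨u, hu, fun h => Finset.disjoint_left.1 hdis huA h⟩
    have hno : ∀ a ∈ A, ∀ b ∈ B, ¬ H.Adj a b := by
      intro a ha b hb hab
      simp only [A, B, R, Finset.mem_filter] at ha hb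
      obtain ⟨hbS, hbR⟩ := hb
      obtain ⟨haS, haR⟩ := ha
      apply hbR
      by_cases hub : u = b
      · exact Or.inl hub
      right
      have e : ∀ g, IsMax H S g → g a = a → g b = b → False :=
        fun g hg h1 h2 => max_no_add hg haS hbS hab h1 h2
      rcases haR with rfl | haR
      · exact e
      · exact gallai hub haR e (hA a haS)
    obtain ⟨fA, hfA⟩ := exists_max H A
    obtain ⟨fB, hfB⟩ := exists_max H B
    obtain ⟨k, hk, hkc⟩ := hfA.1.glue hfB.1 hdis
    rw [hAB] at hk
    have e1 := hf.2 k hk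
    have e2 := supp_card hfA.1.inv
    have e3 := supp_card hfB.1.inv
    obtain ⟨T1, a1, a2, a3⟩ := ih A hAs (low fA).card (by omega)
      (fun g hg => (hfA.2 g hg).trans e2.le)
    obtain ⟨T2, b1, b2, b3⟩ := ih B hBs (low fB).card (by omega)
      (fun g hg => (hfB.2 g hg).trans e3.le)
    refine ⟨T1 ∪ T2, ?_, ?_, ?_⟩
    · rw [← hAB]; exact Finset.union_subset_union a1 b1
    · intro a ha b hb hab
      rcases Finset.mem_union.1 ha with ha | ha <;> rcases Finset.mem_union.1 hb with hb | hb
      · exact a2 a ha b hb hab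
      · exact hno a (a1 ha) b (b1 hb) hab
      · exact hno b (a1 hb) a (b1 ha) hab.symm
      · exact b2 a ha b hb hab
    · rw [Finset.card_union_of_disjoint
        (Finset.disjoint_of_subset_left a1 (Finset.disjoint_of_subset_right b1 hdis))]
      omega
  · push Not at hB
    apply ramsey_small hH S N (by omega)
    have h1 := Finset.card_sdiff_add_card_eq_card hf.1.supp_sub
    have h2 : (S \ supp f).card ≤ 1 := by
      rw [Finset.card_le_one]
      intro a ha b hb
      rw [Finset.mem_sdiff, mem_supp, not_not] at ha hb
      by_contra hab
      exact hB a ha.1 b hb.1 hab f hf ha.2 hb.2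
    omega

lemma colorable_of_mat (G : SimpleGraph V) {f : V → V} (hf : Mat Gᶜ Finset.univ f) :
    G.Colorable (Fintype.card V - (low f).card) := by
  have hinv := hf.inv
  let C : G.Coloring {v : V // v ∈ (low f)ᶜ} := SimpleGraph.Coloring.mk
    (fun v => ⟨max v (f v), by
      simp only [low, Finset.compl_filter, Finset.mem_filter, Finset.mem_univ, true_and, not_lt]
      rcases max_cases v (f v) with ⟨h, h'⟩ | ⟨h, h'⟩
      · rw [h]; exact h'
      · rw [h, hinv]; exact h'.le⟩) (by
      intro v w hvw heq
      have heq := congrArg Subtype.val heq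
      simp only at heq
      have hne := hvw.ne
      have e1 := hinv v
      have e2 := hinv w
      have h1 : f v = w := by
        rcases max_cases v (f v) with ⟨h, h'⟩ | ⟨h, h'⟩ <;>
        rcases max_cases w (f w) with ⟨k, k'⟩ | ⟨k, k'⟩ <;> grind
      have h2 := (hf.adj v (by rw [h1]; exact hne.symm)).2
      rw [h1, SimpleGraph.compl_adj] at h2
      exact h2.2 hvw)
  have := C.colorable
  rwa [Fintype.card_coe, Finset.card_compl] at this

end matching

lemma lower (e : ℕ) : ∀ (_ : e ≤ 5) (V : Type) [Fintype V] [LinearOrder V] (G : SimpleGraph V)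
    (r : ℕ), Fintype.card V ≤ r + 1 + e → ¬ G.Colorable r →
    ∃ T : Finset V, G.IsClique (T : Set V) ∧ r + 1 ≤ T.card + e / 2 := by
  induction e using Nat.strong_induction_on with
  | _ e ih =>
  intro he V _ _ G r hcard hcol
  classical
  by_cases htri : TriFree Gᶜ
  · obtain ⟨T, -, hT, hTc⟩ := main_ind htri Finset.univ (Fintype.card V - (r + 1)) (by omega) (by
      intro f hf
      have h1 := supp_card hf.inv
      by_contra hlt
      apply hcol
      exact (colorable_of_mat G hf).mono (by omega))
    refine ⟨T, ?_, ?_⟩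
    · intro a ha b hb hab
      by_contra hn
      exact hT a ha b hb (by rw [SimpleGraph.compl_adj]; exact ⟨hab, hn⟩)
    · rw [Finset.card_univ] at hTc
      have : r < Fintype.card V := by
        by_contra hh
        exact hcol (G.colorable_of_fintype.mono (by omega))
      omega
  · unfold TriFree at htri
    push Not at htri
    obtain ⟨a, b, c, hab, hbc, hac, -⟩ := htri
    let I : Finset V := {a, b, c}
    have hI : I.card = 3 := Finset.card_eq_three.2 ⟨a, b, c, hab.ne, hac.ne, hbc.ne, rfl⟩
    rw [SimpleGraph.compl_adj] at hab hbc hac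
    have hind : ∀ x ∈ I, ∀ y ∈ I, ¬ G.Adj x y := by
      intro x hx y hy
      simp only [I, Finset.mem_insert, Finset.mem_singleton] at hx hy
      have := G.adj_comm
      have := fun z => G.loopless.irrefl z
      grind
    let W := {v : V // v ∉ I}
    have hW : Fintype.card W + 3 = Fintype.card V := by
      have h1 : Fintype.card W = Fintype.card V - Fintype.card {v // v ∈ I} :=
        Fintype.card_subtype_compl _
      have h2 := Finset.card_le_univ I
      rw [Fintype.card_coe] at h1
      omega
    let G' : SimpleGraph W := G.comap Subtype.val
    by_cases hr : r = 0
    · exact ⟨{a}, by simp, by rw [Finset.card_singleton]; omega⟩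
    have hcol' : ¬ G'.Colorable (r - 1) := by
      rintro ⟨C⟩
      apply hcol
      have : G.Coloring (Option (Fin (r - 1))) := SimpleGraph.Coloring.mk
        (fun v => if h : v ∈ I then none else some (C ⟨v, h⟩)) (by
          intro v w hvw heq
          by_cases hv : v ∈ I <;> by_cases hw : w ∈ I
          · exact hind v hv w hw hvw
          · simp [hv, hw] at heq
          · simp [hv, hw] at heq
          · simp only [hv, hw, dite_false, Option.some.injEq] at heq
            exact C.valid (v := ⟨v, hv⟩) (w := ⟨w, hw⟩) hvw heq)
      have := this.colorable
      rw [Fintype.card_option, Fintype.card_fin] at this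
      exact this.mono (by omega)
    have hW2 : r - 1 < Fintype.card W := by
      by_contra hh
      exact hcol' (G'.colorable_of_fintype.mono (by omega))
    obtain ⟨T, hT, hTc⟩ := ih (e - 2) (by omega) (by omega) W G' (r - 1) (by omega) hcol'
    refine ⟨T.map (Function.Embedding.subtype _), ?_, ?_⟩
    · intro x hx y hy hxy
      simp only [Finset.coe_map, Set.mem_image, Function.Embedding.subtype_apply] at hx hy
      obtain ⟨x', hx', rfl⟩ := hx
      obtain ⟨y', hy', rfl⟩ := hy
      exact hT hx' hy' (fun h => hxy (congrArg _ h))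
    · rw [Finset.card_map]; omega

/-- Complement of the (3,5)-Ramsey circulant on 13 vertices, as a Boolean relation. -/
def bad (i j : ℕ) : Bool :=
  i < 13 && j < 13 && ((i + 13 - j) % 13 == 1 || (i + 13 - j) % 13 == 5 ||
    (i + 13 - j) % 13 == 8 || (i + 13 - j) % 13 == 12)

lemma bad_symm : ∀ i < 13, ∀ j < 13, bad i j = bad j i := by decide +kernel

lemma bad_tri_fin : ∀ i j : Fin 13, bad i j = true → ∀ k : Fin 13, bad j k = true →
    bad i k = true → False := by decide +kernel

lemma bad_tri (i : ℕ) (hi : i < 13) (j : ℕ) (hj : j < 13) (h1 : bad i j = true)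
    (k : ℕ) (hk : k < 13) : bad j k = true → bad i k = true → False :=
  bad_tri_fin ⟨i, hi⟩ ⟨j, hj⟩ h1 ⟨k, hk⟩

/-- Adjacency in the 13-vertex graph. -/
def good (i j : ℕ) : Bool := !(i == j) && !(bad i j)

lemma good_k5 : ∀ a b : Fin 13, good a b = true →
    ∀ c : Fin 13, (good a c && good b c) = true →
    ∀ d : Fin 13, (good a d && good b d && good c d) = true →
    ∀ e : Fin 13, (good a e && good b e && good c e && good d e) = false := by
  decide +kernel

lemma bad_lt {i j : ℕ} (h : bad i j = true) : i < 13 ∧ j < 13 := by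
  simp only [bad, Bool.and_eq_true, decide_eq_true_eq] at h
  exact h.1

/-- The extremal graph: the 13-vertex graph joined with a complete graph. -/
def ext (n : ℕ) : SimpleGraph (Fin n) where
  Adj i j := i ≠ j ∧ bad i j = false
  symm := ⟨by
    rintro i j ⟨h, h'⟩
    refine ⟨h.symm, ?_⟩
    by_contra hh
    rw [Bool.not_eq_false] at hh
    obtain ⟨h1, h2⟩ := bad_lt hh
    rw [bad_symm _ h1 _ h2, h'] at hh
    exact Bool.false_ne_true hh⟩
  loopless := ⟨fun i h => h.1 rfl⟩

lemma card_small (r : ℕ) (hr : 6 ≤ r) :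
    (Finset.univ.filter (fun i : Fin (r + 7) => (i : ℕ) < 13)).card = 13 := by
  rw [Fin.card_filter_val_lt]; omega

lemma card_large (r : ℕ) (hr : 6 ≤ r) :
    (Finset.univ.filter (fun i : Fin (r + 7) => ¬ (i : ℕ) < 13)).card = r - 6 := by
  have h1 := Finset.card_filter_add_card_filter_not (s := Finset.univ)
    (fun i : Fin (r + 7) => (i : ℕ) < 13)
  rw [card_small r hr, Finset.card_univ, Fintype.card_fin] at h1
  omega

lemma ext_cliqueFree (r : ℕ) (hr : 6 ≤ r) : (ext (r + 7)).CliqueFree (r - 1) := by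
  intro s hs
  have hcl := hs.isClique
  have hc := hs.card_eq
  have h1 := Finset.card_filter_add_card_filter_not (s := s)
    (fun i : Fin (r + 7) => (i : ℕ) < 13)
  have h2 : (s.filter (fun i : Fin (r + 7) => ¬ (i : ℕ) < 13)).card ≤ r - 6 := by
    rw [← card_large r hr]
    exact Finset.card_le_card (Finset.filter_subset_filter _ (Finset.subset_univ s))
  obtain ⟨t, ht, htc⟩ := Finset.exists_subset_card_eq
    (s := s.filter (fun i : Fin (r + 7) => (i : ℕ) < 13)) (n := 5) (by omega)
  let φ := t.orderEmbOfFin htc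
  have hlt : ∀ k, (φ k : ℕ) < 13 := fun k =>
    (Finset.mem_filter.1 (ht (Finset.orderEmbOfFin_mem t htc k))).2
  have hmem : ∀ k, φ k ∈ s := fun k =>
    (Finset.mem_filter.1 (ht (Finset.orderEmbOfFin_mem t htc k))).1
  have hne : ∀ k l, k ≠ l → φ k ≠ φ l := fun k l h h' => h (φ.injective h')
  have hv : ∀ k l, k ≠ l → (φ k : ℕ) ≠ φ l := fun k l h h' => hne k l h (Fin.ext h')
  have hb : ∀ k l, k ≠ l → good (φ k) (φ l) = true := fun k l h => by
    have h1 := (hcl (hmem k) (hmem l) (hne k l h)).2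
    have h2 := hv k l h
    simp [good, h1, h2]
  have h5 := good_k5 ⟨_, hlt 0⟩ ⟨_, hlt 1⟩ (hb 0 1 (by decide))
    ⟨_, hlt 2⟩ (by simp [hb]) ⟨_, hlt 3⟩ (by simp [hb]) ⟨_, hlt 4⟩
  simp [hb] at h5

lemma ext_not_colorable (r : ℕ) (hr : 6 ≤ r) : ¬ (ext (r + 7)).Colorable r := by
  rintro ⟨C⟩
  have hbad : ∀ i j, i ≠ j → C i = C j → bad i j = true := by
    intro i j hij hc
    by_contra hb
    rw [Bool.not_eq_true] at hb
    exact C.valid (show (ext (r + 7)).Adj i j from ⟨hij, hb⟩) hc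
  let A := Finset.univ.filter (fun i : Fin (r + 7) => (i : ℕ) < 13)
  let B := Finset.univ.filter (fun i : Fin (r + 7) => ¬ (i : ℕ) < 13)
  have hB : (B.image C).card = r - 6 := by
    rw [← card_large r hr]
    apply Finset.card_image_of_injOn
    intro i hi j hj hij
    by_contra hne
    have hi' : ¬ (i : ℕ) < 13 := by simpa [B] using hi
    exact hi' (bad_lt (hbad i j hne hij)).1
  have hdis : Disjoint (A.image C) (B.image C) := by
    rw [Finset.disjoint_left]
    intro c hc hc'
    obtain ⟨i, hi, rfl⟩ := Finset.mem_image.1 hc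
    obtain ⟨j, hj, hij⟩ := Finset.mem_image.1 hc'
    have hi' := (Finset.mem_filter.1 hi).2
    have hj' := (Finset.mem_filter.1 hj).2
    have hne : j ≠ i := by rintro rfl; exact hj' hi'
    exact hj' (bad_lt (hbad j i hne hij)).1
  have h1 : (A.image C).card + (B.image C).card ≤ r := by
    rw [← Finset.card_union_of_disjoint hdis]
    simpa using Finset.card_le_univ (A.image C ∪ B.image C)
  have h2 : A.card ≤ 2 * (A.image C).card := by
    apply Finset.card_le_mul_card_image
    intro c hc
    by_contra hlt
    obtain ⟨x, y, z, hx, hy, hz, hxy, hxz, hyz⟩ := Finset.two_lt_card_iff.1 (not_le.1 hlt)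
    rw [Finset.mem_filter] at hx hy hz
    have e1 := hbad x y hxy (hx.2.trans hy.2.symm)
    have e2 := hbad y z hyz (hy.2.trans hz.2.symm)
    have e3 := hbad x z hxz (hx.2.trans hz.2.symm)
    exact bad_tri _ (bad_lt e1).1 _ (bad_lt e1).2 e1 _ (bad_lt e2).2 e2 e3
  have h3 : A.card = 13 := card_small r hr
  omega

lemma chrom_iff {V : Type} (G : SimpleGraph V) (r : ℕ) :
    (r + 1 : ℕ∞) ≤ G.chromaticNumber ↔ ¬ G.Colorable r := by
  rw [← SimpleGraph.chromaticNumber_le_iff_colorable, not_le]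
  exact ENat.add_one_le_iff (ENat.natCast_ne_top r)

lemma lower_bound (r : ℕ) (hr : 6 ≤ r) (V : Type) [Fintype V] (G : SimpleGraph V)
    (hG : G.CliqueFree (r - 1)) (hχ : (r + 1 : ℕ∞) ≤ G.chromaticNumber) :
    r + 7 ≤ Fintype.card V := by
  by_contra hlt
  rw [chrom_iff] at hχ
  let _ : LinearOrder V := LinearOrder.lift' (Fintype.equivFin V) (Fintype.equivFin V).injective
  obtain ⟨T, hT, hTc⟩ := lower 5 le_rfl V G r (by omega) hχ
  exact (hG.mono (show r - 1 ≤ T.card by omega)) T ⟨hT, rfl⟩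

end FolkmanAux

theorem stmt_1 (r : ℕ) (hr : 6 ≤ r) :
    (∀ (V : Type) [Fintype V] (G : SimpleGraph V),
        G.CliqueFree (r - 1) → (r + 1 : ℕ∞) ≤ G.chromaticNumber →
        r + 7 ≤ Fintype.card V) ∧
    (∃ G : SimpleGraph (Fin (r + 7)),
        G.CliqueFree (r - 1) ∧ (r + 1 : ℕ∞) ≤ G.chromaticNumber) ∧
    folkman r (r - 1) = r + 7 := by
  have hex : ∃ G : SimpleGraph (Fin (r + 7)),
      G.CliqueFree (r - 1) ∧ (r + 1 : ℕ∞) ≤ G.chromaticNumber :=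
    ⟨FolkmanAux.ext (r + 7), FolkmanAux.ext_cliqueFree r hr,
      (FolkmanAux.chrom_iff _ r).2 (FolkmanAux.ext_not_colorable r hr)⟩
  refine ⟨fun V _ G h1 h2 => FolkmanAux.lower_bound r hr V G h1 h2, hex, ?_⟩
  apply le_antisymm
  · exact Nat.sInf_le hex
  · refine le_csInf ⟨_, hex⟩ ?_
    rintro n ⟨G, h1, h2⟩
    simpa using FolkmanAux.lower_bound r hr (Fin n) G h1 h2
end

section
/- Let G be a finite simple graph and set f(G) = χ(G) − ω(G). If f(G) ≤ 4, then the number of vertices of G satisfies |V(G)| ≥ χ(G) + 2·f(G). -/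
open SimpleGraph

namespace S9

/-- An involution all of whose moved points are moved along edges of `H` (a matching). -/
def Valid {V : Type*} (H : SimpleGraph V) (N : Equiv.Perm V) : Prop :=
  (∀ x, N (N x) = x) ∧ ∀ x, N x ≠ x → H.Adj x (N x)

section
variable {V : Type*} [Fintype V] [DecidableEq V]

/-- The fixed points. -/
def fixs (N : Equiv.Perm V) : Finset V := Finset.univ.filter (fun x => N x = x)

lemma mem_fixs {N : Equiv.Perm V} {x : V} : x ∈ fixs N ↔ N x = x := by
  simp [fixs]

lemma valid_swap_mul {H : SimpleGraph V} {N : Equiv.Perm V} (hN : Valid H N) {u v : V}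
    (huv : H.Adj u v) (hu : N u = u) (hv : N v = v) :
    Valid H (Equiv.swap u v * N) := by
  have hne := huv.ne
  obtain ⟨h1, h2⟩ := hN
  have key : ∀ x, x ≠ u → x ≠ v → (Equiv.swap u v * N) x = N x := by
    intro x hxu hxv
    rw [Equiv.Perm.mul_apply]
    apply Equiv.swap_apply_of_ne_of_ne
    · intro h; exact hxu (N.injective (h.trans hu.symm))
    · intro h; exact hxv (N.injective (h.trans hv.symm))
  have ku : (Equiv.swap u v * N) u = v := by simp [hu]
  have kv : (Equiv.swap u v * N) v = u := by simp [hv]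
  constructor
  · intro x
    by_cases hxu : x = u
    · subst hxu; rw [ku, kv]
    by_cases hxv : x = v
    · subst hxv; rw [kv, ku]
    rw [key x hxu hxv, key, h1]
    · intro h; exact hxu (N.injective (h.trans hu.symm))
    · intro h; exact hxv (N.injective (h.trans hv.symm))
  · intro x
    by_cases hxu : x = u
    · subst hxu; rw [ku]; intro _; exact huv
    by_cases hxv : x = v
    · subst hxv; rw [kv]; intro _; exact huv.symm
    rw [key x hxu hxv]; exact h2 x

lemma fixs_swap_mul {H : SimpleGraph V} {N : Equiv.Perm V} {u v : V}
    (huv : H.Adj u v) (hu : N u = u) (hv : N v = v) :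
    (fixs (Equiv.swap u v * N)).card < (fixs N).card := by
  have hne := huv.ne
  apply Finset.card_lt_card
  rw [Finset.ssubset_iff_of_subset]
  · refine ⟨u, by simp [fixs, hu], ?_⟩
    rw [mem_fixs]; simp [hu, hne.symm]
  · intro x hx
    simp only [mem_fixs, Equiv.Perm.mul_apply] at hx ⊢
    by_cases h : N x = u
    · rw [h] at hx; simp at hx; subst hx; exact absurd (h.symm.trans hv) hne
    by_cases h' : N x = v
    · rw [h'] at hx; simp at hx; subst hx; exact absurd (h'.symm.trans hu) hne.symm
    rwa [Equiv.swap_apply_of_ne_of_ne h h'] at hx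

lemma fixs_conj (N : Equiv.Perm V) (x z : V) :
    (fixs (Equiv.swap x z * N * Equiv.swap x z)).card = (fixs N).card := by
  apply Finset.card_bij (fun a _ => Equiv.swap x z a)
  · intro a ha
    simp only [mem_fixs, Equiv.Perm.mul_apply] at ha ⊢
    have := congrArg (Equiv.swap x z) ha
    simpa using this
  · intro a _ b _ h; exact (Equiv.swap x z).injective h
  · intro b hb
    refine ⟨Equiv.swap x z b, ?_, by simp⟩
    simp only [mem_fixs, Equiv.Perm.mul_apply] at hb ⊢
    simp [hb]

/-- Gallai's lemma. -/
lemma gallai (H : SimpleGraph V) (hH : H.Connected) (D : ℕ) (hD : 2 ≤ D)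
    (hmin : ∀ N, Valid H N → D ≤ (fixs N).card)
    (hall : ∀ v, ∃ N, Valid H N ∧ (fixs N).card ≤ D ∧ N v = v) : False := by
  classical
  let P : ℕ → Prop := fun d => ∃ (M : Equiv.Perm V) (u v : V), Valid H M ∧ (fixs M).card ≤ D ∧
    u ≠ v ∧ M u = u ∧ M v = v ∧ H.dist u v = d
  have hex : ∃ d, P d := by
    obtain ⟨v0⟩ := hH.nonempty
    obtain ⟨M, hM, hc, -⟩ := hall v0
    have h2 : 1 < (fixs M).card := lt_of_lt_of_le (by omega) (hmin M hM)
    obtain ⟨u, hu, v, hv, huv⟩ := Finset.one_lt_card.1 h2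
    exact ⟨_, M, u, v, hM, hc, huv, by simpa [fixs] using hu, by simpa [fixs] using hv, rfl⟩
  obtain ⟨M, u, v, hM, hMc, huv, hMu, hMv, hd⟩ := Nat.find_spec hex
  have hminP : ∀ (N : Equiv.Perm V) (a b : V), Valid H N → (fixs N).card ≤ D → a ≠ b → N a = a →
      N b = b → H.dist u v ≤ H.dist a b := by
    intro N a b h1 h2 h3 h4 h5
    rw [hd]
    exact Nat.find_min' hex ⟨N, a, b, h1, h2, h3, h4, h5, rfl⟩
  have hnadj : ¬ H.Adj u v := by
    intro hadj
    have h1 := hmin _ (valid_swap_mul hM hadj hMu hMv)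
    have h2 := fixs_swap_mul hadj hMu hMv
    omega
  -- intermediate vertex
  obtain ⟨t, htu, htv, hdu, hdv⟩ : ∃ t, t ≠ u ∧ t ≠ v ∧ H.dist t u < H.dist u v ∧
      H.dist t v < H.dist u v := by
    obtain ⟨p, hp⟩ := (hH.preconnected u v).exists_walk_length_eq_dist
    cases p with
    | nil => exact absurd rfl huv
    | @cons _ t _ hadj q =>
      have htv : t ≠ v := by rintro rfl; exact hnadj hadj
      have hq : H.dist t v ≤ q.length := SimpleGraph.dist_le q
      have h0 : 0 < H.dist t v := (hH.preconnected t v).pos_dist_of_ne htv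
      have h1 : H.dist t u = 1 := SimpleGraph.dist_eq_one_iff_adj.2 hadj.symm
      simp only [Walk.length_cons] at hp
      exact ⟨t, hadj.ne.symm, htv, by omega, by omega⟩
  let Q : Finset (Equiv.Perm V) :=
    Finset.univ.filter (fun N => Valid H N ∧ (fixs N).card ≤ D ∧ N t = t)
  have hQ : Q.Nonempty := by
    obtain ⟨N, hN⟩ := hall t
    exact ⟨N, by simpa [Q] using hN⟩
  obtain ⟨N, hNQ, hNmax⟩ := Finset.exists_max_image Q
    (fun N => (Finset.univ.filter (fun x => M x = N x)).card) hQ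
  obtain ⟨hN, hNc, hNt⟩ : Valid H N ∧ (fixs N).card ≤ D ∧ N t = t := by simpa [Q] using hNQ
  have hNu : N u ≠ u := fun h => by
    have := hminP N t u hN hNc htu hNt h
    omega
  have hNv : N v ≠ v := fun h => by
    have := hminP N t v hN hNc htv hNt h
    omega
  -- find x
  obtain ⟨x, hxt, hNx, hMx⟩ : ∃ x, x ≠ t ∧ N x = x ∧ M x ≠ x := by
    have e : (fixs M).card ≤ (fixs N).card := hMc.trans (hmin N hN)
    have e1 := Finset.card_sdiff_add_card_inter (fixs M) (fixs N)
    have e2 := Finset.card_sdiff_add_card_inter (fixs N) (fixs M)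
    rw [Finset.inter_comm] at e2
    have e3 : 1 < (fixs M \ fixs N).card := Finset.one_lt_card.2
      ⟨u, by simp [fixs, hMu, hNu], v, by simp [fixs, hMv, hNv], huv⟩
    have e4 : 1 < (fixs N \ fixs M).card := by omega
    obtain ⟨x, hx, hxt⟩ := Finset.exists_mem_ne e4 t
    simp [fixs] at hx
    exact ⟨x, hxt, hx.1, hx.2⟩
  obtain ⟨y, hy⟩ : ∃ y, y = M x := ⟨_, rfl⟩
  have hMy : M y = x := by rw [hy, hM.1]
  have hadj : H.Adj x y := hy ▸ hM.2 x hMx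
  have hyx : y ≠ x := hadj.ne.symm
  have hNy : N y ≠ y := by
    intro h
    have h1 := hmin _ (valid_swap_mul hN hadj hNx h)
    have h2 := fixs_swap_mul hadj hNx h
    omega
  obtain ⟨z, hz⟩ : ∃ z, z = N y := ⟨_, rfl⟩
  have hNz : N z = y := by rw [hz, hN.1]
  have hzy : z ≠ y := hz ▸ hNy
  have hzx : z ≠ x := by rintro rfl; exact hyx (hNz.symm.trans hNx)
  have hzt : z ≠ t := by rintro rfl; exact hzy (hNt.symm.trans hNz)
  have kx : (Equiv.swap x z * N * Equiv.swap x z) x = y := by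
    simp [hNz, Equiv.swap_apply_of_ne_of_ne hyx hzy.symm]
  have ky : (Equiv.swap x z * N * Equiv.swap x z) y = x := by
    simp [← hz, Equiv.swap_apply_of_ne_of_ne hyx hzy.symm]
  have kz : (Equiv.swap x z * N * Equiv.swap x z) z = z := by
    simp [hNx]
  have hother : ∀ w, w ≠ x → w ≠ y → w ≠ z → N w ≠ x ∧ N w ≠ y ∧ N w ≠ z := by
    intro w h1 h2 h3
    refine ⟨fun h => h1 (N.injective (h.trans hNx.symm)), fun h => h3 (N.injective (h.trans hNz.symm)),
      fun h => h2 (N.injective (h.trans hz))⟩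
  have kw : ∀ w, w ≠ x → w ≠ y → w ≠ z → (Equiv.swap x z * N * Equiv.swap x z) w = N w := by
    intro w h1 h2 h3
    obtain ⟨g1, g2, g3⟩ := hother w h1 h2 h3
    simp [Equiv.swap_apply_of_ne_of_ne h1 h3, Equiv.swap_apply_of_ne_of_ne g1 g3]
  have hcard := fixs_conj N x z
  generalize Equiv.swap x z * N * Equiv.swap x z = N' at kx ky kz kw hcard
  have hV' : Valid H N' := by
    constructor
    · intro w
      by_cases h1 : w = x
      · subst h1; rw [kx, ky]
      by_cases h2 : w = y
      · subst h2; rw [ky, kx]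
      by_cases h3 : w = z
      · subst h3; rw [kz, kz]
      obtain ⟨g1, g2, g3⟩ := hother w h1 h2 h3
      rw [kw w h1 h2 h3, kw _ g1 g2 g3, hN.1]
    · intro w hw
      by_cases h1 : w = x
      · subst h1; rw [kx]; exact hadj
      by_cases h2 : w = y
      · subst h2; rw [ky]; exact hadj.symm
      by_cases h3 : w = z
      · subst h3; exact absurd kz hw
      rw [kw w h1 h2 h3] at hw ⊢
      exact hN.2 w hw
  have hyt : y ≠ t := by rintro rfl; exact hNy hNt
  have hN't : N' t = t := by rw [kw t hxt.symm hyt.symm hzt.symm, hNt]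
  have hle := hNmax N' (by simp [Q, hV', hN't, hcard, hNc])
  have hlt : (Finset.univ.filter (fun x => M x = N x)).card <
      (Finset.univ.filter (fun x => M x = N' x)).card := by
    apply Finset.card_lt_card
    rw [Finset.ssubset_iff_of_subset]
    · refine ⟨x, by simp [kx, hy], by simp [hNx, hMx]⟩
    · intro w hw
      simp only [Finset.mem_filter, Finset.mem_univ, true_and] at hw ⊢
      by_cases h1 : w = x
      · subst h1; rw [kx, hy]
      by_cases h2 : w = y
      · subst h2; rw [ky, hMy]
      by_cases h3 : w = z
      · subst h3; exact absurd (M.injective (hw.trans (hNz.trans hy))) h1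
      rw [kw w h1 h2 h3, hw]
  omega

/-- Colorings with classes of size at most two yield involutions. -/
lemma exists_invol (G : SimpleGraph V)
    (hα : ∀ x y z : V, x ≠ y → y ≠ z → x ≠ z → G.Adj x y ∨ G.Adj y z ∨ G.Adj x z)
    {γ : Type*} [Fintype γ] [DecidableEq γ] (g : V → γ) (hg : ∀ x y, G.Adj x y → g x ≠ g y) :
    ∃ N, Valid Gᶜ N ∧ Fintype.card V + (fixs N).card ≤ 2 * Fintype.card γ ∧
      ∀ x, (∀ y, g y = g x → y = x) → N x = x := by
  classical
  have huniq : ∀ x y z, y ≠ x → g y = g x → z ≠ y → g z = g y → z = x := by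
    intro x y z h1 h2 h3 h4
    by_contra h5
    rcases hα x y z h1.symm h3.symm (Ne.symm h5) with h | h | h
    · exact hg _ _ h h2.symm
    · exact hg _ _ h h4.symm
    · exact hg _ _ h (h2.symm.trans h4.symm)
  let f : V → V := fun x => if h : ∃ y, y ≠ x ∧ g y = g x then h.choose else x
  have f1 : ∀ x, (∃ y, y ≠ x ∧ g y = g x) → f x ≠ x ∧ g (f x) = g x := by
    intro x h
    have : f x = h.choose := dif_pos h
    rw [this]; exact h.choose_spec
  have f2 : ∀ x, (¬ ∃ y, y ≠ x ∧ g y = g x) → f x = x := fun x h => dif_neg h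
  have hinv : Function.Involutive f := by
    intro x
    by_cases h : ∃ y, y ≠ x ∧ g y = g x
    · obtain ⟨h1, h2⟩ := f1 x h
      obtain ⟨h3, h4⟩ := f1 (f x) ⟨x, h1.symm, h2.symm⟩
      exact huniq x (f x) _ h1 h2 h3 h4
    · rw [f2 x h, f2 x h]
  refine ⟨hinv.toPerm, ⟨fun x => hinv x, ?_⟩, ?_, ?_⟩
  · intro x hx
    change f x ≠ x at hx
    change Gᶜ.Adj x (f x)
    have h : ∃ y, y ≠ x ∧ g y = g x := by
      by_contra h; exact hx (f2 x h)
    rw [SimpleGraph.compl_adj]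
    exact ⟨hx.symm, fun h' => hg _ _ h' (f1 x h).2.symm⟩
  · have e1 : Fintype.card V = ∑ c : γ, (Finset.univ.filter (fun x => g x = c)).card := by
      rw [← Finset.card_univ]
      exact Finset.card_eq_sum_card_fiberwise (fun x _ => Finset.mem_coe.2 (Finset.mem_univ _))
    have e2 : (fixs hinv.toPerm).card =
        ∑ c : γ, ((fixs hinv.toPerm).filter (fun x => g x = c)).card :=
      Finset.card_eq_sum_card_fiberwise (fun x _ => Finset.mem_coe.2 (Finset.mem_univ _))
    rw [e1, e2, ← Finset.sum_add_distrib]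
    calc _ ≤ ∑ c : γ, 2 := Finset.sum_le_sum ?_
      _ = _ := by simp [mul_comm]
    intro c _
    by_cases hc : ∃ x, g x = c
    · obtain ⟨x, rfl⟩ := hc
      by_cases h : ∃ y, y ≠ x ∧ g y = g x
      · obtain ⟨y, hyx, hy⟩ := h
        have a1 : (Finset.univ.filter (fun w => g w = g x)) ⊆ {x, y} := by
          intro w hw
          simp only [Finset.mem_filter, Finset.mem_univ, true_and] at hw
          by_cases hwy : w = y
          · simp [hwy]
          · simp [huniq x y w hyx hy hwy (hw.trans hy.symm)]
        have a2 : ((fixs hinv.toPerm).filter (fun w => g w = g x)) = ∅ := by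
          apply Finset.filter_eq_empty_iff.2
          intro w hw hw'
          have hw2 : f w = w := mem_fixs.1 hw
          by_cases hwx : w = x
          · subst hwx; exact (f1 w ⟨y, hyx, hy⟩).1 hw2
          · exact (f1 w ⟨x, Ne.symm hwx, hw'.symm⟩).1 hw2
        rw [a2]
        have := (Finset.card_le_card a1).trans Finset.card_le_two
        simpa using this
      · have a1 : (Finset.univ.filter (fun w => g w = g x)) ⊆ {x} := by
          intro w hw
          simp only [Finset.mem_filter, Finset.mem_univ, true_and] at hw
          by_contra hwx
          exact h ⟨w, by simpa using hwx, hw⟩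
        have a2 : ((fixs hinv.toPerm).filter (fun w => g w = g x)) ⊆ {x} :=
          (Finset.filter_subset_filter _ (Finset.subset_univ _)).trans a1
        have b1 := Finset.card_le_card a1
        have b2 := Finset.card_le_card a2
        simp only [Finset.card_singleton] at b1 b2
        omega
    · have a1 : (Finset.univ.filter (fun w => g w = c)) = ∅ :=
        Finset.filter_eq_empty_iff.2 (fun w _ hw => hc ⟨w, hw⟩)
      have a2 : ((fixs hinv.toPerm).filter (fun w => g w = c)) = ∅ :=
        Finset.filter_eq_empty_iff.2 (fun w _ hw => hc ⟨w, hw⟩)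
      simp [a1, a2]
  · intro x hx
    exact f2 x (fun ⟨y, h1, h2⟩ => h1 (hx y h2))

/-- Involutions yield colorings. -/
lemma colorable_of_invol (G : SimpleGraph V) (N : Equiv.Perm V) (hN : Valid Gᶜ N) (c : ℕ)
    (hc : Fintype.card V + (fixs N).card ≤ 2 * c + 1) : G.Colorable c := by
  classical
  let g : V → Sym2 V := fun x => s(x, N x)
  let I : Finset (Sym2 V) := Finset.univ.image g
  have hI : ∀ x, g x ∈ I := fun x => Finset.mem_image_of_mem _ (Finset.mem_univ _)
  have hgg : ∀ x, g (N x) = g x := by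
    intro x; simp only [g, hN.1]; exact Sym2.eq_swap
  have hcol : G.Colorable I.card := by
    let col : G.Coloring I := Coloring.mk (fun x => ⟨g x, hI x⟩) (by
      intro x y hxy h
      have h' : g x = g y := congrArg Subtype.val h
      simp only [g, Sym2.eq_iff] at h'
      rcases h' with ⟨h, -⟩ | ⟨h, h2⟩
      · exact hxy.ne h
      · have := hN.2 y (by rw [← h]; exact hxy.ne)
        rw [← h] at this
        exact ((SimpleGraph.compl_adj _ _ _).1 this).2 hxy.symm)
    have := col.colorable
    simpa using this
  refine hcol.mono ?_
  have e1 : Fintype.card V = ∑ c ∈ I, (Finset.univ.filter (fun x => g x = c)).card := by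
    rw [← Finset.card_univ]
    exact Finset.card_eq_sum_card_fiberwise (fun x _ => Finset.mem_coe.2 (hI x))
  have e2 : (fixs N).card = ∑ c ∈ I, ((fixs N).filter (fun x => g x = c)).card :=
    Finset.card_eq_sum_card_fiberwise (fun x _ => Finset.mem_coe.2 (hI x))
  have e3 : ∑ c ∈ I, 2 ≤ Fintype.card V + (fixs N).card := by
    rw [e1, e2, ← Finset.sum_add_distrib]
    apply Finset.sum_le_sum
    intro d hd
    obtain ⟨x, -, rfl⟩ := Finset.mem_image.1 hd
    by_cases hx : N x = x
    · have b1 : 0 < (Finset.univ.filter (fun w => g w = g x)).card :=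
        Finset.card_pos.2 ⟨x, by simp⟩
      have b2 : 0 < ((fixs N).filter (fun w => g w = g x)).card :=
        Finset.card_pos.2 ⟨x, by simp [fixs, hx]⟩
      omega
    · have b1 : 1 < (Finset.univ.filter (fun w => g w = g x)).card :=
        Finset.one_lt_card.2 ⟨x, by simp, N x, by simp [hgg], Ne.symm hx⟩
      omega
  simp at e3
  omega

/-- Ramsey bound. -/
lemma ramsey (G : SimpleGraph V)
    (hα : ∀ x y z : V, x ≠ y → y ≠ z → x ≠ z → G.Adj x y ∨ G.Adj y z ∨ G.Adj x z) (k : ℕ) :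
    ∀ S : Finset V, k * (k + 1) ≤ 2 * S.card → ∃ T : Finset V, T ⊆ S ∧ G.IsClique T ∧ k ≤ T.card := by
  classical
  induction k with
  | zero => intro S _; exact ⟨∅, by simp, by simp, by simp⟩
  | succ k ih =>
    intro S hS
    have hpos : 0 < S.card := by nlinarith
    obtain ⟨v, hv⟩ := Finset.card_pos.1 hpos
    let A := (S.erase v).filter (fun w => G.Adj v w)
    let B := (S.erase v).filter (fun w => ¬ G.Adj v w)
    have hAB : A.card + B.card = (S.erase v).card :=
      Finset.card_filter_add_card_filter_not _
    have hE : (S.erase v).card + 1 = S.card := Finset.card_erase_add_one hv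
    by_cases hB : k + 1 ≤ B.card
    · refine ⟨B, fun w hw => Finset.mem_of_mem_erase (Finset.mem_filter.1 hw).1, ?_, hB⟩
      intro x hx y hy hxy
      simp [B] at hx hy
      rcases hα v x y (Ne.symm hx.1.1) hxy (Ne.symm hy.1.1) with h | h | h
      · exact absurd h hx.2
      · exact h
      · exact absurd h hy.2
    · obtain ⟨T, hTA, hT, hTc⟩ := ih A (by nlinarith)
      have hvT : v ∉ T := fun h => by have := hTA h; simp [A] at this
      refine ⟨insert v T, ?_, ?_, ?_⟩
      · intro w hw
        rcases Finset.mem_insert.1 hw with rfl | hw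
        · exact hv
        · exact Finset.mem_of_mem_erase (Finset.mem_filter.1 (hTA hw)).1
      · rw [Finset.coe_insert]
        apply hT.insert
        intro b hb _
        exact (Finset.mem_filter.1 (hTA hb)).2
      · rw [Finset.card_insert_of_notMem hvT]; omega

end

lemma colorable_union {V : Type*} (G : SimpleGraph V) (A : Set V) (a b : ℕ)
    (ha : (G.induce A).Colorable a) (hb : (G.induce Aᶜ).Colorable b) : G.Colorable (a + b) := by
  classical
  obtain ⟨f⟩ := ha
  obtain ⟨g⟩ := hb
  let col : G.Coloring (Fin a ⊕ Fin b) := Coloring.mk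
    (fun x => if h : x ∈ A then Sum.inl (f ⟨x, h⟩) else Sum.inr (g ⟨x, h⟩)) (by
      intro x y hxy
      by_cases hx : x ∈ A <;> by_cases hy : y ∈ A <;> simp only [hx, hy, dite_true, dite_false]
      · intro h
        exact f.valid (v := ⟨x, hx⟩) (w := ⟨y, hy⟩) hxy (Sum.inl.inj h)
      · simp
      · simp
      · intro h
        exact g.valid (v := ⟨x, hx⟩) (w := ⟨y, hy⟩) hxy (Sum.inr.inj h))
  simpa using col.colorable

lemma card_split {V : Type*} [Fintype V] (A : Set V) [Fintype A] [Fintype (Aᶜ : Set V)] :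
    Fintype.card A + Fintype.card (Aᶜ : Set V) = Fintype.card V := by
  have h := Set.ncard_add_ncard_compl A
  rw [← Nat.card_coe_set_eq, ← Nat.card_coe_set_eq, Nat.card_eq_fintype_card,
    Nat.card_eq_fintype_card, Nat.card_eq_fintype_card] at h
  exact h

lemma clique_map {V : Type*} (G : SimpleGraph V) (A : Set V) (s : Finset A)
    (hs : (G.induce A).IsClique s) : ∃ t : Finset V, t.card = s.card ∧ G.IsClique t ∧ ∀ x ∈ t, x ∈ A := by
  classical
  refine ⟨s.map (Function.Embedding.subtype _), by simp, ?_, ?_⟩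
  · intro x hx y hy hxy
    simp at hx hy
    obtain ⟨hx, hx'⟩ := hx
    obtain ⟨hy, hy'⟩ := hy
    exact hs hx' hy' (fun h => hxy (congrArg Subtype.val h))
  · intro x hx
    simp at hx
    exact hx.1

lemma colorable_card {V : Type*} [Fintype V] (G : SimpleGraph V) {c : ℕ}
    (h : Fintype.card V ≤ c) : G.Colorable c := (G.colorable_of_fintype).mono h

lemma exists_crit {V : Type*} [Fintype V] [Nonempty V] (G : SimpleGraph V) :
    ∃ c, ¬ G.Colorable c ∧ G.Colorable (c + 1) := by
  classical
  have hex : ∃ n, G.Colorable n := ⟨_, G.colorable_of_fintype⟩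
  have h0 : Nat.find hex ≠ 0 := by
    intro h
    have := Nat.find_spec hex
    rw [h] at this
    obtain ⟨f⟩ := this
    exact (f (Classical.arbitrary V)).elim0
  refine ⟨Nat.find hex - 1, Nat.find_min hex (by omega), ?_⟩
  have := Nat.find_spec hex
  rwa [Nat.sub_add_cancel (by omega)]

universe u

theorem main (n : ℕ) : ∀ {V : Type u} [Fintype V] (G : SimpleGraph V) (c : ℕ),
    Fintype.card V = n → ¬ G.Colorable c → n ≤ c + 8 →
    ∃ s : Finset V, G.IsClique s ∧ 3 * (c + 1) ≤ n + 2 * s.card := by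
  classical
  induction n using Nat.strong_induction_on with
  | _ n ih =>
  intro V _ G c hn hc hnc
  have hV : Nonempty V := by
    by_contra h
    rw [not_nonempty_iff] at h
    exact hc (colorable_card G (by simp))
  have hpos : 0 < n := hn ▸ Fintype.card_pos
  by_cases hα : ∀ x y z : V, x ≠ y → y ≠ z → x ≠ z → G.Adj x y ∨ G.Adj y z ∨ G.Adj x z
  swap
  · push Not at hα
    obtain ⟨x, y, z, hxy, hyz, hxz, a1, a2, a3⟩ := hα
    have hA : Fintype.card ({x, y, z} : Set V) = 3 := by
      rw [← Set.toFinset_card]; simp [hxy, hyz, hxz]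
    have hsp := card_split ({x, y, z} : Set V)
    rcases c with _ | c
    · exact ⟨∅, by simp, by omega⟩
    have h1 : (G.induce ({x, y, z} : Set V)).Colorable 1 := by
      refine ⟨Coloring.mk (fun _ => 0) ?_⟩
      rintro ⟨u, hu⟩ ⟨v, hv⟩ huv
      exfalso
      have huv' : G.Adj u v := huv
      simp only [Set.mem_insert_iff, Set.mem_singleton_iff] at hu hv
      rcases hu with rfl | rfl | rfl <;> rcases hv with rfl | rfl | rfl <;>
        simp_all [G.adj_comm]
    have h2 : ¬ (G.induce ({x, y, z} : Set V)ᶜ).Colorable c := fun h =>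
      hc (by rw [add_comm]; exact colorable_union G _ 1 c h1 h)
    obtain ⟨s, hs, hsc⟩ := ih (n - 3) (by omega) _ c (by omega) h2 (by omega)
    obtain ⟨t, ht, htc, -⟩ := clique_map G _ s hs
    exact ⟨t, htc, by omega⟩
  by_cases hcrit : ∀ v : V, (G.induce ({v} : Set V)ᶜ).Colorable c
  swap
  · push Not at hcrit
    obtain ⟨v, hv⟩ := hcrit
    have hsp := card_split ({v} : Set V)
    have h1 : Fintype.card ({v} : Set V) = 1 := by simp
    obtain ⟨s, hs, hsc⟩ := ih (n - 1) (by omega) _ c (by omega) hv (by omega)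
    obtain ⟨t, ht, htc, -⟩ := clique_map G _ s hs
    exact ⟨t, htc, by omega⟩
  by_cases hconn : Gᶜ.Connected
  swap
  · obtain ⟨u, v, huv⟩ : ∃ u v, ¬ Gᶜ.Reachable u v := by
      by_contra h
      push Not at h
      exact hconn ⟨h⟩
    let A : Set V := {w | Gᶜ.Reachable u w}
    have hAB : ∀ a ∈ A, ∀ b ∈ Aᶜ, G.Adj a b := by
      intro a ha b hb
      by_contra h
      apply hb
      have hne : a ≠ b := by rintro rfl; exact hb ha
      have : Gᶜ.Adj a b := (SimpleGraph.compl_adj _ _ _).2 ⟨hne, h⟩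
      exact Reachable.trans ha this.reachable
    have : Nonempty A := ⟨⟨u, Reachable.refl u⟩⟩
    have : Nonempty (Aᶜ : Set V) := ⟨⟨v, huv⟩⟩
    have hsp := card_split A
    have pA : 0 < Fintype.card A := Fintype.card_pos
    have pB : 0 < Fintype.card (Aᶜ : Set V) := Fintype.card_pos
    obtain ⟨a, ha, ha'⟩ := exists_crit (G.induce A)
    obtain ⟨b, hb, hb'⟩ := exists_crit (G.induce Aᶜ)
    have hab : c < (a + 1) + (b + 1) := by
      by_contra h
      exact hc ((colorable_union G A _ _ ha' hb').mono (by omega))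
    have ha1 : a < Fintype.card A := by
      by_contra h; exact ha (colorable_card _ (by omega))
    have hb1 : b < Fintype.card (Aᶜ : Set V) := by
      by_contra h; exact hb (colorable_card _ (by omega))
    obtain ⟨s, hs, hsc⟩ := ih _ (by omega) (G.induce A) a rfl ha (by omega)
    obtain ⟨s', hs', hsc'⟩ := ih _ (by omega) (G.induce Aᶜ) b rfl hb (by omega)
    obtain ⟨t, ht, htc, htA⟩ := clique_map G _ s hs
    obtain ⟨t', ht', htc', htA'⟩ := clique_map G _ s' hs'
    have hdis : Disjoint t t' := by
      rw [Finset.disjoint_left]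
      intro x hx hx'
      exact htA' x hx' (htA x hx)
    refine ⟨t ∪ t', ?_, ?_⟩
    · intro x hx y hy hxy
      simp only [Finset.coe_union, Set.mem_union, Finset.mem_coe] at hx hy
      rcases hx with hx | hx <;> rcases hy with hy | hy
      · exact htc hx hy hxy
      · exact hAB x (htA x hx) y (htA' y hy)
      · exact (hAB y (htA y hy) x (htA' x hx)).symm
      · exact htc' hx hy hxy
    · rw [Finset.card_union_of_disjoint hdis]; omega
  -- Gallai
  have hn2 : 2 * c + 1 ≤ n := by
    by_contra hlt
    apply gallai Gᶜ hconn (2 * c + 2 - n) (by omega)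
    · intro N hN
      by_contra h
      exact hc (colorable_of_invol G N hN c (by omega))
    · intro v
      obtain ⟨f⟩ := hcrit v
      obtain ⟨N, hN, hNc, hNf⟩ := exists_invol G hα
        (fun x => if h : x ∈ ({v} : Set V)ᶜ then some (f ⟨x, h⟩) else none) (by
          intro x y hxy
          by_cases hx : x ∈ ({v} : Set V)ᶜ <;> by_cases hy : y ∈ ({v} : Set V)ᶜ <;>
            simp only [hx, hy, dite_true, dite_false]
          · intro h
            exact f.valid (v := ⟨x, hx⟩) (w := ⟨y, hy⟩) hxy (Option.some.inj h)
          · simp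
          · simp
          · simp at hx hy
            subst hx; subst hy
            exact absurd hxy G.irrefl)
      refine ⟨N, hN, ?_, hNf v ?_⟩
      · simp at hNc
        omega
      · intro y hy
        by_contra hyv
        simp [hyv] at hy
  have hr : ∀ k, k * (k + 1) ≤ 2 * n → c + 2 ≤ 2 * k → ∃ s : Finset V, G.IsClique s ∧
      3 * (c + 1) ≤ n + 2 * s.card := by
    intro k hk hck
    obtain ⟨T, -, hT, hTc⟩ := ramsey G hα k Finset.univ (by rw [Finset.card_univ, hn]; exact hk)
    exact ⟨T, hT, by omega⟩
  have hc7 : c ≤ 7 := by omega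
  interval_cases c
  · exact hr 1 (by omega) (by omega)
  · exact hr 2 (by omega) (by omega)
  · exact hr 2 (by omega) (by omega)
  · exact hr 3 (by omega) (by omega)
  · exact hr 3 (by omega) (by omega)
  · exact hr 4 (by omega) (by omega)
  · exact hr 4 (by omega) (by omega)
  · exact hr 5 (by omega) (by omega)

end S9

theorem stmt_9 {V : Type*} [Fintype V] (G : SimpleGraph V)
    (h : G.chromaticNumber.toNat - G.cliqueNum ≤ 4) :
    G.chromaticNumber.toNat + 2 * (G.chromaticNumber.toNat - G.cliqueNum) ≤
      Fintype.card V := by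
  have hcol : G.Colorable G.chromaticNumber.toNat :=
    SimpleGraph.colorable_chromaticNumber G.colorable_of_fintype
  have hle : ∀ m, G.Colorable m → G.chromaticNumber.toNat ≤ m := by
    intro m hm
    exact ENat.toNat_le_of_le_natCast hm.chromaticNumber_le
  generalize G.chromaticNumber.toNat = χ at *
  by_contra hlt
  have hχn := hle _ G.colorable_of_fintype
  rcases χ with _ | c
  · omega
  have hc : ¬ G.Colorable c := fun hc => by have := hle _ hc; omega
  obtain ⟨s, hs, hsc⟩ := S9.main _ G c rfl hc (by omega)
  have := hs.card_le_cliqueNum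
  omega
end
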